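/- Let Π be a group, g ∈ Π, and Γ ≤ Π a subgroup of finite index N. Let g_Γ be the permutation of the right-coset set Γ\Π induced by right multiplication by g, and suppose g_Γ has cycles of lengths l₁, …, l_d (so l₁ + ⋯ + l_d = N). Then the geometric determinant of 1 − g_Γ acting on ℂ[Γ\Π] equals ∏_{j=1}^d l_j, and consequently det'(1 − g_Γ) ≤ (N/d)^d. -/

import Mathlib

open Module MulAction

/-- The geometric determinant `det'(f)`: the product of the nonzero singular values of `f`. -/
noncomputable def detp {𝕜 E F : Type*} [RCLike 𝕜] [NormedAddCommGroup E] [InnerProductSpace 𝕜 E]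
    [NormedAddCommGroup F] [InnerProductSpace 𝕜 F] [FiniteDimensional 𝕜 E] [FiniteDimensional 𝕜 F]
    (f : E →ₗ[𝕜] F) : ℝ :=
  have hT : (LinearMap.adjoint f ∘ₗ f).IsSymmetric := fun x y => by
    simp only [LinearMap.comp_apply, LinearMap.adjoint_inner_left, LinearMap.adjoint_inner_right]
  ∏ i : Fin (finrank 𝕜 E),
    if hT.eigenvalues rfl i = 0 then 1 else Real.sqrt (hT.eigenvalues rfl i)

/-- The unitary operator on `ℂ[R]` induced by a group element `g` acting on a finite set `R`. -/
noncomputable def permOp (G R : Type*) [Group G] [MulAction G R] [Fintype R] (g : G) :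
    EuclideanSpace ℂ R →ₗ[ℂ] EuclideanSpace ℂ R :=
  (WithLp.linearEquiv 2 ℂ (R → ℂ)).symm.toLinearMap ∘ₗ
    LinearMap.funLeft ℂ ℂ (fun r => g⁻¹ • r) ∘ₗ
    (WithLp.linearEquiv 2 ℂ (R → ℂ)).toLinearMap

/-! Each cycle of `g` on `R` is a copy of `ZMod l` on which `g` translates by `1`, so the discrete
Fourier transform on every cycle diagonalises `permOp G R g`, with eigenvalues the `l`-th roots of
unity, and its adjoint, with the conjugate eigenvalues. Hence the nonzero singular values of
`1 - permOp G R g` coming from that cycle are `‖1 - ζ‖` with `ζ ^ l = 1`, `ζ ≠ 1`, and their product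
is the value of `(X ^ l - 1) / (X - 1)` at `1`, namely `l`. -/

open Subgroup Function ZMod

theorem prod_le_sum_div_card_pow_card {ι : Type*} (s : Finset ι) (z : ι → ℝ)
    (hz : ∀ i ∈ s, 0 ≤ z i) : ∏ i ∈ s, z i ≤ ((∑ i ∈ s, z i) / s.card) ^ s.card := by
  obtain rfl | hs := s.eq_empty_or_nonempty
  · simp
  have amgm : (∏ i ∈ s, z i) ^ ((s.card : ℝ)⁻¹) ≤ (∑ i ∈ s, z i) / s.card := by
    simpa using Real.geom_mean_le_arith_mean s 1 z (by simp) (by simpa using hs) hz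
  have hprod : 0 ≤ ∏ i ∈ s, z i := Finset.prod_nonneg hz
  calc ∏ i ∈ s, z i = ((∏ i ∈ s, z i) ^ ((s.card : ℝ)⁻¹)) ^ s.card :=
        (Real.rpow_inv_natCast_pow hprod hs.card_ne_zero).symm
    _ ≤ ((∑ i ∈ s, z i) / s.card) ^ s.card := by gcongr

theorem addChar_natCast {A M : Type*} [AddMonoidWithOne A] [Monoid M] (ψ : AddChar A M) (j : ℕ) :
    ψ j = ψ 1 ^ j := by
  rw [← AddChar.map_nsmul_eq_pow, nsmul_one]

section StdAddChar

variable {n : ℕ} [NeZero n]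

theorem isPrimitiveRoot_stdAddChar_one : IsPrimitiveRoot (stdAddChar (1 : ZMod n)) n := by
  have h := stdAddChar_coe (N := n) 1
  rw [Int.cast_one, Int.cast_one, mul_one] at h
  exact h ▸ Complex.isPrimitiveRoot_exp n (NeZero.ne n)

theorem prod_zmod_eq_prod_range {M : Type*} [CommMonoid M] (f : ZMod n → M) :
    ∏ k, f k = ∏ j ∈ Finset.range n, f j :=
  Finset.prod_nbij' ZMod.val Nat.cast (fun k _ ↦ Finset.mem_range.mpr k.val_lt)
    (fun _ _ ↦ Finset.mem_univ _) (fun k _ ↦ ZMod.natCast_zmod_val k)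
    (fun _ hj ↦ ZMod.val_cast_of_lt (Finset.mem_range.mp hj))
    (fun k _ ↦ by rw [ZMod.natCast_zmod_val])

theorem prod_one_sub_stdAddChar_of_ne_zero :
    ∏ k : ZMod n with k ≠ 0, (1 - stdAddChar k) = (n : ℂ) := by
  obtain ⟨m, rfl⟩ := Nat.exists_eq_succ_of_ne_zero (NeZero.ne n)
  have hne {j : ℕ} (hj : j ∈ Finset.range m) : ((j + 1 : ℕ) : ZMod (m + 1)) ≠ 0 := by
    rw [Ne, ZMod.natCast_eq_zero_iff]
    exact Nat.not_dvd_of_pos_of_lt j.succ_pos (Nat.succ_lt_succ (Finset.mem_range.mp hj))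
  calc ∏ k : ZMod (m + 1) with k ≠ 0, (1 - stdAddChar k)
      = ∏ j ∈ Finset.range m, (1 - stdAddChar ((j + 1 : ℕ) : ZMod (m + 1))) := by
        rw [Finset.prod_filter, prod_zmod_eq_prod_range, Finset.prod_range_succ', Nat.cast_zero,
          if_neg (not_not.mpr rfl), mul_one]
        exact Finset.prod_congr rfl fun j hj ↦ if_pos (hne hj)
    _ = ∏ j ∈ Finset.range m, (1 - stdAddChar (1 : ZMod (m + 1)) ^ (j + 1)) := by
        simp only [addChar_natCast _ (_ + 1)]
    _ = (m + 1 : ℕ) := by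
        rw [isPrimitiveRoot_stdAddChar_one.prod_one_sub_pow_eq_order, Nat.cast_succ]

theorem prod_ite_norm_one_sub_stdAddChar :
    ∏ k : ZMod n, (if 1 - stdAddChar k = 0 then 1 else ‖1 - stdAddChar k‖) = n := by
  have hzero (k : ZMod n) : 1 - stdAddChar k = 0 ↔ k = 0 := by
    rw [sub_eq_zero, eq_comm, ← AddChar.map_zero_eq_one (stdAddChar (N := n)),
      injective_stdAddChar.eq_iff]
  simp only [hzero, ← ite_not (_ = _), ← Finset.prod_filter, ← norm_prod]
  rw [prod_one_sub_stdAddChar_of_ne_zero, Complex.norm_natCast]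

theorem dft_comp_add_right {E : Type*} [AddCommGroup E] [Module ℂ E] (Φ : ZMod n → E)
    (a k : ZMod n) : dft (fun j ↦ Φ (j + a)) k = stdAddChar (a * k) • dft Φ k := by
  simp only [dft_apply, Finset.smul_sum, smul_smul, ← AddChar.map_add_eq_mul]
  refine Fintype.sum_equiv (Equiv.addRight a) _ _ fun j ↦ ?_
  rw [Equiv.coe_addRight]
  congr 2
  ring

end StdAddChar

theorem roots_charpoly_of_diagonal {A V ι : Type*} [CommRing A] [IsDomain A] [AddCommGroup V]
    [Module A V] [Module.Finite A V] [Module.Free A V] [Fintype ι] (T : V →ₗ[A] V)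
    (e : V ≃ₗ[A] (ι → A)) (c : ι → A) (h : ∀ x i, e (T x) i = c i * e x i) :
    T.charpoly.roots = Finset.univ.val.map c := by
  classical
  have hconj : e.conj T = (Matrix.diagonal c).toLin' := by
    refine LinearMap.ext fun x ↦ funext fun i ↦ ?_
    rw [LinearEquiv.conj_apply_apply, h, LinearEquiv.apply_symm_apply, Matrix.toLin'_apply,
      Matrix.mulVec_diagonal]
  rw [← LinearEquiv.charpoly_conj e, hconj, Matrix.charpoly_toLin', Matrix.charpoly_diagonal]
  have hroots := Polynomial.roots_multiset_prod_X_sub_C (Finset.univ.val.map c)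
  rwa [Multiset.map_map] at hroots

section Detp

variable {𝕜 E F ι : Type*} [RCLike 𝕜] [NormedAddCommGroup E] [InnerProductSpace 𝕜 E]
  [NormedAddCommGroup F] [InnerProductSpace 𝕜 F] [FiniteDimensional 𝕜 E] [FiniteDimensional 𝕜 F]
  [Fintype ι]

theorem detp_eq_prod_sqrt_of_diagonal (f : E →ₗ[𝕜] F) (e : E ≃ₗ[𝕜] (ι → 𝕜)) (μ : ι → ℝ)
    (h : ∀ x i, e (LinearMap.adjoint f (f x)) i = μ i * e x i) :
    detp f = ∏ i, if μ i = 0 then 1 else √(μ i) := by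
  have hT : (LinearMap.adjoint f ∘ₗ f).IsSymmetric := f.isPositive_adjoint_comp_self.isSymmetric
  have hμ : Finset.univ.val.map (hT.eigenvalues rfl) = Finset.univ.val.map μ := by
    apply Multiset.map_injective (RCLike.ofReal_injective (K := 𝕜))
    rw [Multiset.map_map, Multiset.map_map, ← hT.roots_charpoly_eq_eigenvalues]
    exact roots_charpoly_of_diagonal _ e _ h
  have hprod := congrArg (fun s ↦ (s.map fun t : ℝ ↦ if t = 0 then 1 else √t).prod) hμ
  simp only [Multiset.map_map] at hprod
  exact hprod

theorem detp_eq_prod_norm_of_diagonal (f : E →ₗ[𝕜] E) (e : E ≃ₗ[𝕜] (ι → 𝕜)) (c : ι → 𝕜)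
    (hf : ∀ x i, e (f x) i = c i * e x i)
    (hadj : ∀ x i, e (LinearMap.adjoint f x) i = star (c i) * e x i) :
    detp f = ∏ i, if c i = 0 then 1 else ‖c i‖ := by
  rw [detp_eq_prod_sqrt_of_diagonal f e (fun i ↦ ‖c i‖ ^ 2) fun x i ↦ ?_]
  · refine Finset.prod_congr rfl fun i _ ↦ ?_
    simp
  · rw [hadj, hf, ← mul_assoc, RCLike.star_def, RCLike.conj_mul, RCLike.ofReal_pow]

end Detp

section Cycles

variable {G : Type*} [Group G] (R : Type*) [MulAction G R] (g : G)

/-- Points of `R` recorded as a cycle of `g` together with a position along that cycle; a cycle is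
encoded as an orbit of `⟨g⟩`, and positions are counted from its chosen representative. -/
abbrev CyclePosition : Type _ :=
  Σ ω : orbitRel.Quotient (zpowers g) R, ZMod (minimalPeriod (g • ·) ω.out)

/-- The decomposition of `R` into the cycles of `g`. It generalises
`Subgroup.quotientEquivSigmaZMod` from coset spaces to arbitrary `G`-sets. -/
noncomputable def cyclePositionEquiv : CyclePosition R g ≃ R :=
  ((selfEquivSigmaOrbits (zpowers g) R).trans
    (Equiv.sigmaCongrRight fun ω ↦ orbitZPowersEquiv g ω.out)).symm

variable {R g}

theorem cyclePositionEquiv_intCast (ω : orbitRel.Quotient (zpowers g) R) (k : ℤ) :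
    cyclePositionEquiv R g ⟨ω, k⟩ = g ^ k • ω.out := by
  change ((orbitZPowersEquiv g ω.out).symm k : R) = _
  rw [orbitZPowersEquiv_symm_apply']
  rfl

theorem zpow_smul_cyclePositionEquiv (a : ℤ) (i : CyclePosition R g) :
    g ^ a • cyclePositionEquiv R g i = cyclePositionEquiv R g ⟨i.1, i.2 + a⟩ := by
  obtain ⟨ω, j⟩ := i
  obtain ⟨k, rfl⟩ := ZMod.intCast_surjective j
  rw [← Int.cast_add, cyclePositionEquiv_intCast, cyclePositionEquiv_intCast, smul_smul,
    ← zpow_add, add_comm]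

theorem card_orbit_eq_minimalPeriod (ω : orbitRel.Quotient (zpowers g) R) :
    Nat.card ω.orbit = minimalPeriod (g • ·) ω.out := by
  rw [orbitRel.Quotient.orbit_eq_orbit_out ω Quotient.out_eq',
    Nat.card_congr (orbitZPowersEquiv g ω.out), Nat.card_zmod]

end Cycles

theorem sum_card_orbit (G R : Type*) [Group G] [MulAction G R] [Finite R]
    [Fintype (orbitRel.Quotient G R)] :
    ∑ ω : orbitRel.Quotient G R, Nat.card ω.orbit = Nat.card R := by
  rw [← Nat.card_sigma, Nat.card_congr (selfEquivSigmaOrbits' G R)]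

section PermOp

variable {G R : Type*} [Group G] [MulAction G R] [Fintype R] (g : G)

theorem permOp_apply (x : EuclideanSpace ℂ R) (r : R) : permOp G R g x r = x (g⁻¹ • r) := rfl

theorem adjoint_permOp : LinearMap.adjoint (permOp G R g) = permOp G R g⁻¹ := by
  refine ((LinearMap.eq_adjoint_iff _ _).mpr fun x y ↦ ?_).symm
  simp only [PiLp.inner_apply, permOp_apply, inv_inv]
  exact Fintype.sum_equiv (MulAction.toPerm g) _ _ fun r ↦ by simp

variable (R) in
/-- The discrete Fourier transform on each cycle of `g`. It is not normalised, hence not unitary: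
only its diagonalising `permOp G R g` matters. -/
noncomputable def cycleFourier : EuclideanSpace ℂ R ≃ₗ[ℂ] (CyclePosition R g → ℂ) :=
  WithLp.linearEquiv 2 ℂ (R → ℂ) ≪≫ₗ
    LinearEquiv.funCongrLeft ℂ ℂ (cyclePositionEquiv R g) ≪≫ₗ
    LinearEquiv.piCurry ℂ (fun _ _ ↦ ℂ) ≪≫ₗ
    LinearEquiv.piCongrRight (fun _ ↦ dft) ≪≫ₗ
    (LinearEquiv.piCurry ℂ (fun _ _ ↦ ℂ)).symm

theorem cycleFourier_apply (x : EuclideanSpace ℂ R) (i : CyclePosition R g) :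
    cycleFourier R g x i = dft (fun j ↦ x (cyclePositionEquiv R g ⟨i.1, j⟩)) i.2 := rfl

theorem cycleFourier_permOp_zpow (a : ℤ) (x : EuclideanSpace ℂ R) (i : CyclePosition R g) :
    cycleFourier R g (permOp G R (g ^ a) x) i =
      stdAddChar (-(a : ZMod (minimalPeriod (g • ·) i.1.out)) * i.2) * cycleFourier R g x i := by
  have hshift (j : ZMod (minimalPeriod (g • ·) i.1.out)) :
      permOp G R (g ^ a) x (cyclePositionEquiv R g ⟨i.1, j⟩) =
        x (cyclePositionEquiv R g ⟨i.1, j + -a⟩) := by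
    rw [permOp_apply, ← zpow_neg, zpow_smul_cyclePositionEquiv, Int.cast_neg]
  simp only [cycleFourier_apply, hshift]
  exact dft_comp_add_right (fun j ↦ x (cyclePositionEquiv R g ⟨i.1, j⟩)) (-a) i.2

theorem cycleFourier_id_sub_permOp (x : EuclideanSpace ℂ R) (i : CyclePosition R g) :
    cycleFourier R g ((LinearMap.id - permOp G R g : _ →ₗ[ℂ] EuclideanSpace ℂ R) x) i =
      (1 - stdAddChar (-i.2)) * cycleFourier R g x i := by
  have h := cycleFourier_permOp_zpow g 1 x i
  rw [zpow_one, Int.cast_one, neg_one_mul] at h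
  rw [LinearMap.sub_apply, LinearMap.id_apply, map_sub, Pi.sub_apply, h, sub_mul, one_mul]

theorem cycleFourier_adjoint_id_sub_permOp (x : EuclideanSpace ℂ R) (i : CyclePosition R g) :
    cycleFourier R g (LinearMap.adjoint (LinearMap.id - permOp G R g) x) i =
      star (1 - stdAddChar (-i.2)) * cycleFourier R g x i := by
  have h := cycleFourier_permOp_zpow g (-1) x i
  rw [zpow_neg_one, Int.cast_neg, Int.cast_one, neg_neg, one_mul] at h
  have hstar : star (1 - stdAddChar (-i.2)) = 1 - stdAddChar i.2 := by
    rw [star_sub, star_one, AddChar.map_neg_eq_conj, RCLike.star_def, Complex.conj_conj]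
  rw [map_sub, LinearMap.adjoint_id, adjoint_permOp, LinearMap.sub_apply, LinearMap.id_apply,
    map_sub, Pi.sub_apply, h, hstar, sub_mul, one_mul]

theorem detp_id_sub_permOp [Fintype (orbitRel.Quotient (zpowers g) R)] :
    detp (LinearMap.id - permOp G R g) =
      ∏ ω : orbitRel.Quotient (zpowers g) R, (Nat.card ω.orbit : ℝ) := by
  rw [detp_eq_prod_norm_of_diagonal _ (cycleFourier R g) (fun i ↦ 1 - stdAddChar (-i.2))
    (cycleFourier_id_sub_permOp g) (cycleFourier_adjoint_id_sub_permOp g), Fintype.prod_sigma]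
  refine Finset.prod_congr rfl fun ω _ ↦ ?_
  rw [card_orbit_eq_minimalPeriod, ← prod_ite_norm_one_sub_stdAddChar]
  exact Fintype.prod_equiv (Equiv.neg _) _ _ fun _ ↦ rfl

end PermOp

theorem stmt15_general {G R : Type*} [Group G] [MulAction G R] [Fintype R] (g : G) :
    detp (LinearMap.id - permOp G R g) =
        ∏ᶠ ω : orbitRel.Quotient (zpowers g) R, (Nat.card ω.orbit : ℝ) ∧
      detp (LinearMap.id - permOp G R g) ≤
        ((Nat.card R : ℝ) / Nat.card (orbitRel.Quotient (zpowers g) R)) ^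
          Nat.card (orbitRel.Quotient (zpowers g) R) := by
  have : Fintype (orbitRel.Quotient (zpowers g) R) := Fintype.ofFinite _
  rw [finprod_eq_prod_of_fintype, detp_id_sub_permOp, ← sum_card_orbit (zpowers g) R,
    Nat.card_eq_fintype_card (α := orbitRel.Quotient (zpowers g) R), Nat.cast_sum]
  exact ⟨rfl, prod_le_sum_div_card_pow_card _ _ fun ω _ ↦ Nat.cast_nonneg _⟩

theorem stmt15 {G : Type*} [Group G] (Γ : Subgroup G) [Fintype (G ⧸ Γ)] (g : G)
    (N : ℕ) (hN : Nat.card (G ⧸ Γ) = N)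
    -- the number of cycles of the permutation `g_Γ` of the coset space, i.e. the number of
    -- orbits of `⟨g⟩` acting on `G ⧸ Γ`:
    (d : ℕ) (hd : d = Nat.card (orbitRel.Quotient (Subgroup.zpowers g) (G ⧸ Γ))) :
    detp (LinearMap.id - permOp G (G ⧸ Γ) g) =
        ∏ᶠ ω : orbitRel.Quotient (Subgroup.zpowers g) (G ⧸ Γ), (Nat.card ω.orbit : ℝ) ∧
      detp (LinearMap.id - permOp G (G ⧸ Γ) g) ≤ ((N : ℝ) / d) ^ d := by
  subst hN hd
  exact stmt15_general g
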